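/- arXiv:1804.04951 — 2 statements merged into one kernel-verified Lean document; each statement's English description precedes it below -/
import Mathlib

section
/- Let Λ be a skew bivector on a finite-dimensional real vector space U₁, D₁ = graph(♯_Λ) the associated Dirac structure, g : U₂ → U₁ linear, D₂ = U₂ ⊕ {0}, and Φ(u₁,u₂) = u₁ + g(u₂). Then the forward Dirac structure D = FΦ(D₁ × D₂) equals {(u₁, α₁) : u₁ − ♯_Λ(α₁) ∈ Im g and α₁ ∈ (Im g)°}. In particular the projection of D to U₁* equals (Im g)° and its projection to U₁ equals ♯_Λ((Im g)°) + Im g. -/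
open Module

def pairLR {V : Type*} [AddCommGroup V] [Module ℝ V]
    (x y : V × Module.Dual ℝ V) : ℝ := x.2 y.1 + y.2 x.1

def orthSet {V : Type*} [AddCommGroup V] [Module ℝ V]
    (D : Submodule ℝ (V × Module.Dual ℝ V)) : Set (V × Module.Dual ℝ V) :=
  {x | ∀ y ∈ D, pairLR x y = 0}

def IsDirac {V : Type*} [AddCommGroup V] [Module ℝ V]
    (D : Submodule ℝ (V × Module.Dual ℝ V)) : Prop :=
  (D : Set (V × Module.Dual ℝ V)) = orthSet D

def forwardD {V W : Type*} [AddCommGroup V] [Module ℝ V] [AddCommGroup W] [Module ℝ W]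
    (φ : V →ₗ[ℝ] W) (D : Submodule ℝ (V × Module.Dual ℝ V)) :
    Submodule ℝ (W × Module.Dual ℝ W) :=
  Submodule.map (φ.prodMap (LinearMap.id : Module.Dual ℝ W →ₗ[ℝ] Module.Dual ℝ W))
    (Submodule.comap ((LinearMap.id : V →ₗ[ℝ] V).prodMap φ.dualMap) D)

def prodDirac {V W : Type*} [AddCommGroup V] [Module ℝ V] [AddCommGroup W] [Module ℝ W]
    (D₁ : Submodule ℝ (V × Module.Dual ℝ V)) (D₂ : Submodule ℝ (W × Module.Dual ℝ W)) :
    Submodule ℝ ((V × W) × Module.Dual ℝ (V × W)) :=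
  Submodule.comap
    (LinearMap.prod
      (LinearMap.prod
        ((LinearMap.fst ℝ V W).comp (LinearMap.fst ℝ (V × W) (Module.Dual ℝ (V × W))))
        (((LinearMap.inl ℝ V W).dualMap).comp (LinearMap.snd ℝ (V × W) (Module.Dual ℝ (V × W)))))
      (LinearMap.prod
        ((LinearMap.snd ℝ V W).comp (LinearMap.fst ℝ (V × W) (Module.Dual ℝ (V × W))))
        (((LinearMap.inr ℝ V W).dualMap).comp (LinearMap.snd ℝ (V × W) (Module.Dual ℝ (V × W))))))
    (D₁.prod D₂)

/-!
Write `Φ (u₁, u₂) = u₁ + g u₂`, so that `Φ* α = (α, g* α)`. The condition `(u₂, g* α) ∈ U₂ × {0}`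
says `α ∈ ker g* = (Im g)°` and leaves `u₂` free, while `(u₁, α)` lying on the graph of `♯` forces
`u₁ = ♯ α`. Hence the vectors paired with such an `α` form the coset `♯ α + Im g`.
-/

section Submodule

variable {R M N : Type*} [Semiring R] [AddCommMonoid M] [Module R M]

theorem mem_map_sup_iff_exists_sub_mem [AddCommGroup N] [Module R N] {f : M →ₗ[R] N}
    {p : Submodule R M} {q : Submodule R N} {y : N} :
    y ∈ p.map f ⊔ q ↔ ∃ x ∈ p, y - f x ∈ q := by
  constructor
  · intro hy
    obtain ⟨_, ⟨x, hx, rfl⟩, z, hz, rfl⟩ := Submodule.mem_sup.1 hy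
    exact ⟨x, hx, by rwa [add_sub_cancel_left]⟩
  · rintro ⟨x, hx, hy⟩
    rw [← add_sub_cancel (f x) y]
    exact Submodule.add_mem_sup (Submodule.mem_map_of_mem hx) hy

theorem mem_range_prod_id [AddCommMonoid N] [Module R N] {f : M →ₗ[R] N} {p : N × M} :
    p ∈ LinearMap.range (f.prod LinearMap.id) ↔ p.1 = f p.2 := by
  constructor
  · rintro ⟨x, rfl⟩
    rfl
  · intro hp
    exact ⟨p.2, Prod.ext hp.symm rfl⟩

end Submodule

section Dirac

variable {U V W : Type*} [AddCommGroup U] [Module ℝ U] [AddCommGroup V] [Module ℝ V]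
  [AddCommGroup W] [Module ℝ W]

theorem mem_forwardD {φ : V →ₗ[ℝ] W} {D : Submodule ℝ (V × Dual ℝ V)} {w : W} {α : Dual ℝ W} :
    (w, α) ∈ forwardD φ D ↔ ∃ v, (v, φ.dualMap α) ∈ D ∧ φ v = w := by
  constructor
  · rintro ⟨⟨v, β⟩, hv, h⟩
    obtain ⟨hw, rfl⟩ : φ v = w ∧ β = α := Prod.ext_iff.1 h
    exact ⟨v, hv, hw⟩
  · rintro ⟨v, hv, rfl⟩
    exact ⟨(v, α), hv, rfl⟩

theorem mem_prodDirac {D₁ : Submodule ℝ (V × Dual ℝ V)} {D₂ : Submodule ℝ (W × Dual ℝ W)}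
    {v : V} {w : W} {β : Dual ℝ (V × W)} :
    ((v, w), β) ∈ prodDirac D₁ D₂ ↔
      (v, (LinearMap.inl ℝ V W).dualMap β) ∈ D₁ ∧ (w, (LinearMap.inr ℝ V W).dualMap β) ∈ D₂ :=
  Iff.rfl

theorem mem_forwardD_coprod_prodDirac {f : V →ₗ[ℝ] U} {g : W →ₗ[ℝ] U}
    {D₁ : Submodule ℝ (V × Dual ℝ V)} {D₂ : Submodule ℝ (W × Dual ℝ W)} {u : U} {α : Dual ℝ U} :
    (u, α) ∈ forwardD (f.coprod g) (prodDirac D₁ D₂) ↔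
      ∃ v w, (v, f.dualMap α) ∈ D₁ ∧ (w, g.dualMap α) ∈ D₂ ∧ f v + g w = u := by
  have dualMap_inl : (LinearMap.inl ℝ V W).dualMap ((f.coprod g).dualMap α) = f.dualMap α := by
    ext v
    simp
  have dualMap_inr : (LinearMap.inr ℝ V W).dualMap ((f.coprod g).dualMap α) = g.dualMap α := by
    ext w
    simp
  simp only [mem_forwardD, Prod.exists, mem_prodDirac, dualMap_inl, dualMap_inr,
    LinearMap.coprod_apply, and_assoc]

theorem mem_forwardD_id_coprod_prodDirac_top_bot {g : W →ₗ[ℝ] U}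
    {D₁ : Submodule ℝ (U × Dual ℝ U)} {u : U} {α : Dual ℝ U} :
    (u, α) ∈ forwardD (LinearMap.id.coprod g) (prodDirac D₁ (Submodule.prod ⊤ ⊥)) ↔
      (∃ v, (v, α) ∈ D₁ ∧ u - v ∈ LinearMap.range g) ∧
        α ∈ (LinearMap.range g).dualAnnihilator := by
  rw [mem_forwardD_coprod_prodDirac, ← LinearMap.ker_dualMap_eq_dualAnnihilator_range]
  simp only [LinearMap.dualMap_id, LinearMap.id_apply, Submodule.mem_prod, Submodule.mem_top,
    Submodule.mem_bot, true_and, LinearMap.mem_ker, LinearMap.mem_range, eq_sub_iff_add_eq']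
  tauto

theorem mem_forwardD_id_coprod_prodDirac_graph {s : Dual ℝ U →ₗ[ℝ] U} {g : W →ₗ[ℝ] U}
    {u : U} {α : Dual ℝ U} :
    (u, α) ∈ forwardD (LinearMap.id.coprod g)
        (prodDirac (LinearMap.range (s.prod LinearMap.id)) (Submodule.prod ⊤ ⊥)) ↔
      u - s α ∈ LinearMap.range g ∧ α ∈ (LinearMap.range g).dualAnnihilator := by
  simp only [mem_forwardD_id_coprod_prodDirac_top_bot, mem_range_prod_id, exists_eq_left]

end Dirac

theorem stmt16_general {U₁ U₂ : Type*} [AddCommGroup U₁] [Module ℝ U₁] [AddCommGroup U₂]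
    [Module ℝ U₂] (sharp : Dual ℝ U₁ →ₗ[ℝ] U₁) (g : U₂ →ₗ[ℝ] U₁) :
    let D₁ := LinearMap.range (sharp.prod (LinearMap.id : Dual ℝ U₁ →ₗ[ℝ] Dual ℝ U₁))
    let D₂ := (⊤ : Submodule ℝ U₂).prod (⊥ : Submodule ℝ (Dual ℝ U₂))
    let Φ := (LinearMap.id : U₁ →ₗ[ℝ] U₁).coprod g
    let D := forwardD Φ (prodDirac D₁ D₂)
    (∀ (u₁ : U₁) (α₁ : Dual ℝ U₁), (u₁, α₁) ∈ D ↔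
      (u₁ - sharp α₁ ∈ LinearMap.range g ∧ α₁ ∈ (LinearMap.range g).dualAnnihilator)) ∧
    (∀ α₁ : Dual ℝ U₁, (∃ u₁, (u₁, α₁) ∈ D) ↔ α₁ ∈ (LinearMap.range g).dualAnnihilator) ∧
    (∀ u₁ : U₁, (∃ α₁, (u₁, α₁) ∈ D) ↔
      u₁ ∈ Submodule.map sharp (LinearMap.range g).dualAnnihilator ⊔ LinearMap.range g) := by
  intro D₁ D₂ Φ D
  have mem_D (u α) : (u, α) ∈ D ↔
      u - sharp α ∈ LinearMap.range g ∧ α ∈ (LinearMap.range g).dualAnnihilator :=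
    mem_forwardD_id_coprod_prodDirac_graph
  refine ⟨mem_D, fun α ↦ ⟨?_, fun hα ↦ ?_⟩, fun u ↦ ?_⟩
  · rintro ⟨u, hu⟩
    exact ((mem_D u α).1 hu).2
  · have sharp_mem : (sharp α, α) ∈ D :=
      (mem_D _ _).2 ⟨by rw [sub_self]; exact zero_mem _, hα⟩
    exact ⟨sharp α, sharp_mem⟩
  · simp only [mem_D, mem_map_sup_iff_exists_sub_mem, and_comm]

theorem stmt16 {U₁ U₂ : Type*} [AddCommGroup U₁] [Module ℝ U₁] [AddCommGroup U₂] [Module ℝ U₂]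
    [FiniteDimensional ℝ U₁] [FiniteDimensional ℝ U₂]
    (Λ : Module.Dual ℝ U₁ →ₗ[ℝ] Module.Dual ℝ U₁ →ₗ[ℝ] ℝ)
    (hΛ : ∀ α β : Module.Dual ℝ U₁, Λ α β = - Λ β α)
    (sharp : Module.Dual ℝ U₁ →ₗ[ℝ] U₁)
    (hsharp : ∀ α β : Module.Dual ℝ U₁, β (sharp α) = Λ β α)
    (g : U₂ →ₗ[ℝ] U₁) :
    let D₁ := LinearMap.range (sharp.prod (LinearMap.id : Module.Dual ℝ U₁ →ₗ[ℝ] Module.Dual ℝ U₁));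
    let D₂ := (⊤ : Submodule ℝ U₂).prod (⊥ : Submodule ℝ (Module.Dual ℝ U₂));
    let Φ := (LinearMap.id : U₁ →ₗ[ℝ] U₁).coprod g;
    let D := forwardD Φ (prodDirac D₁ D₂);
    (∀ (u₁ : U₁) (α₁ : Module.Dual ℝ U₁), (u₁, α₁) ∈ D ↔
      (u₁ - sharp α₁ ∈ LinearMap.range g ∧ α₁ ∈ (LinearMap.range g).dualAnnihilator)) ∧
    (∀ α₁ : Module.Dual ℝ U₁, (∃ u₁, (u₁, α₁) ∈ D) ↔
      α₁ ∈ (LinearMap.range g).dualAnnihilator) ∧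
    (∀ u₁ : U₁, (∃ α₁, (u₁, α₁) ∈ D) ↔
      u₁ ∈ Submodule.map sharp (LinearMap.range g).dualAnnihilator ⊔ LinearMap.range g) :=
  stmt16_general sharp g
end

section
/- Let ω be a skew-symmetric bilinear form on a finite-dimensional real vector space U₁ with D₁ = graph(ω^♭), let p : U₁ → U₂ be linear with D₂ = {0} ⊕ U₂*, and define Ψ : U₁ → U₁ × U₂ by Ψ(u₁) = (u₁, p(u₁)). Then the backward Dirac structure D = BΨ(D₁ × D₂) equals {(u₁,α₁) : u₁ ∈ ker p and ω^♭(u₁) − α₁ ∈ (ker p)°}; i.e., D is the Dirac structure determined by the subspace ker p and the restriction of ω to ker p. -/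
open Module

def backwardD {V W : Type*} [AddCommGroup V] [Module ℝ V] [AddCommGroup W] [Module ℝ W]
    (φ : V →ₗ[ℝ] W) (D : Submodule ℝ (W × Module.Dual ℝ W)) :
    Submodule ℝ (V × Module.Dual ℝ V) :=
  Submodule.map ((LinearMap.id : V →ₗ[ℝ] V).prodMap φ.dualMap)
    (Submodule.comap (φ.prodMap (LinearMap.id : Module.Dual ℝ W →ₗ[ℝ] Module.Dual ℝ W)) D)

/-!
A covector on `U₁ × U₂` splits as `β₁.coprod β₂`, and pulling it back along `u ↦ (u, p u)` gives
`β₁ + p* β₂`. The first factor forces `(u, β₁) ∈ D₁`, the second forces `p u = 0` and leaves `β₂`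
free, so the covectors over `u` are the `β₁` up to the range of `p*`, the annihilator of `ker p`.
-/

theorem sub_mem_dualAnnihilator_ker_iff {K V W : Type*} [Field K] [AddCommGroup V] [Module K V]
    [AddCommGroup W] [Module K W] {p : V →ₗ[K] W} {γ α : Dual K V} :
    γ - α ∈ (LinearMap.ker p).dualAnnihilator ↔ ∃ β : Dual K W, γ + p.dualMap β = α := by
  rw [sub_mem_comm_iff, ← LinearMap.range_dualMap_eq_dualAnnihilator_ker, LinearMap.mem_range]
  simp only [eq_sub_iff_add_eq']

section Dirac

variable {V W X : Type*} [AddCommGroup V] [Module ℝ V] [AddCommGroup W] [Module ℝ W]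
  [AddCommGroup X] [Module ℝ X]

theorem mem_backwardD {φ : V →ₗ[ℝ] W} {D : Submodule ℝ (W × Dual ℝ W)} {v : V} {α : Dual ℝ V} :
    (v, α) ∈ backwardD φ D ↔ ∃ β : Dual ℝ W, (φ v, β) ∈ D ∧ φ.dualMap β = α := by
  simp [backwardD]

theorem coprod_mem_prodDirac {D₁ : Submodule ℝ (V × Dual ℝ V)} {D₂ : Submodule ℝ (W × Dual ℝ W)}
    {v : V} {w : W} {β₁ : Dual ℝ V} {β₂ : Dual ℝ W} :
    ((v, w), β₁.coprod β₂) ∈ prodDirac D₁ D₂ ↔ (v, β₁) ∈ D₁ ∧ (w, β₂) ∈ D₂ := by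
  simp [prodDirac, LinearMap.dualMap_apply']

theorem mem_backwardD_prod_prodDirac {f : X →ₗ[ℝ] V} {g : X →ₗ[ℝ] W}
    {D₁ : Submodule ℝ (V × Dual ℝ V)} {D₂ : Submodule ℝ (W × Dual ℝ W)} {x : X} {α : Dual ℝ X} :
    (x, α) ∈ backwardD (f.prod g) (prodDirac D₁ D₂) ↔
      ∃ β₁ β₂, (f x, β₁) ∈ D₁ ∧ (g x, β₂) ∈ D₂ ∧ f.dualMap β₁ + g.dualMap β₂ = α := by
  rw [mem_backwardD, (LinearMap.coprodEquiv ℝ).surjective.exists, Prod.exists]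
  simp only [LinearMap.coprodEquiv_apply, LinearMap.prod_apply, Function.prod_apply,
    coprod_mem_prodDirac, LinearMap.dualMap_apply', LinearMap.coprod_comp_prod, and_assoc]

theorem stmt17_general (D₁ : Submodule ℝ (V × Dual ℝ V)) (p : V →ₗ[ℝ] W) (v : V) (α : Dual ℝ V) :
    (v, α) ∈ backwardD ((LinearMap.id : V →ₗ[ℝ] V).prod p)
        (prodDirac D₁ ((⊥ : Submodule ℝ W).prod (⊤ : Submodule ℝ (Dual ℝ W)))) ↔
      v ∈ LinearMap.ker p ∧ ∃ γ, (v, γ) ∈ D₁ ∧ γ - α ∈ (LinearMap.ker p).dualAnnihilator := by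
  calc
    _ ↔ ∃ β₁ β₂, (v, β₁) ∈ D₁ ∧ p v = 0 ∧ β₁ + p.dualMap β₂ = α := by
      simp [mem_backwardD_prod_prodDirac]
    _ ↔ p v = 0 ∧ ∃ β₁, (v, β₁) ∈ D₁ ∧ ∃ β₂, β₁ + p.dualMap β₂ = α := by
      grind
    _ ↔ _ := by
      simp only [LinearMap.mem_ker, sub_mem_dualAnnihilator_ker_iff]

end Dirac

theorem stmt17 {U₁ U₂ : Type*} [AddCommGroup U₁] [Module ℝ U₁] [AddCommGroup U₂] [Module ℝ U₂]
    [FiniteDimensional ℝ U₁] [FiniteDimensional ℝ U₂]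
    (ω : U₁ →ₗ[ℝ] Module.Dual ℝ U₁) (hskew : ∀ u v : U₁, ω u v = - ω v u)
    (p : U₁ →ₗ[ℝ] U₂) :
    ∀ (u₁ : U₁) (α₁ : Module.Dual ℝ U₁),
      (u₁, α₁) ∈ backwardD ((LinearMap.id : U₁ →ₗ[ℝ] U₁).prod p)
        (prodDirac ω.graph ((⊥ : Submodule ℝ U₂).prod (⊤ : Submodule ℝ (Module.Dual ℝ U₂)))) ↔
      (u₁ ∈ LinearMap.ker p ∧ ω u₁ - α₁ ∈ (LinearMap.ker p).dualAnnihilator) := by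
  intro u₁ α₁
  simpa only [LinearMap.mem_graph_iff, exists_eq_left] using stmt17_general ω.graph p u₁ α₁
end
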